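/- For every 0 < ε < 1 there exists Δ_0 such that for all Δ > Δ_0 the following holds: if G is a multipartite graph with maximum degree at most Δ, parts V_1,...,V_r of size at least (1+ε)Δ, and local degree at most Δ^{1/3}, then there exist subsets W_i ⊆ V_i such that the induced r-partite subgraph G' has maximum degree at most Δ' = (1+ε/3)Δ^{1/3}, every W_i has size at least (1+ε/4)Δ', and the local degree of G' is less than 10. -/

import Mathlib

/-!
Write `M = Δ^{1/3}` and shrink every part to a subset `Q i` of exactly `⌈(1 + ε)Δ⌉` vertices. Keep
each vertex independently with probability `M⁻²`. The number of kept vertices in a fixed set of `n`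
vertices has moment generating function at most `exp (n M⁻² (eᵗ - 1))` (`mgf_count`), and all three
kinds of bad event are controlled by the Chernoff bound with a suitable `t`.

* More than `(1 + ε/3)M` kept neighbours of `v`: the mean is at most `M`, so the probability is
  exponentially small in `M` (`degree_exponent`).
* Too few kept vertices in `Q i`: the mean is at least `(1 + ε)M`, which exceeds
  `(1 + ε/4)(1 + ε/3)M`, so the probability is again exponentially small (`size_exponent`).
* At least ten kept neighbours of `v` in a foreign `Q i`: the mean is at most `1/M`, and `t = log M`
  bounds the probability by `e M^{-10}` (`local_bound`).

For large `M` every bad event therefore has probability at most `1/(36 M⁶)`. Each event is determined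
by at most `3Δ` vertices and each vertex is involved in at most `3Δ` events, so the dependency degree
is at most `9Δ² = 9M⁶`. The symmetric Lovász Local Lemma, in the form `4pd ≤ 1` (`local_lemma`),
yields an outcome that avoids all bad events. Shrinking the parts is what keeps the size events from
depending on too many vertices.
-/
open MeasureTheory ProbabilityTheory

/-! ### The local lemma on a finite product space -/

/-- Events determined by disjoint sets of coordinates are independent under a product measure. -/
theorem indep_of_disjoint {V : Type} [Fintype V] (ν : Measure Bool) [IsProbabilityMeasure ν]
    (S T : Finset V) (hST : Disjoint S T) (A B : Set (V → Bool))
    (hA : ∀ ω ω', (∀ v ∈ S, ω v = ω' v) → ω ∈ A → ω' ∈ A)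
    (hB : ∀ ω ω', (∀ v ∈ T, ω v = ω' v) → ω ∈ B → ω' ∈ B) :
    (Measure.pi fun _ : V => ν).real (A ∩ B) =
      (Measure.pi fun _ : V => ν).real A * (Measure.pi fun _ : V => ν).real B := by
  have hind : iIndepFun (fun (i : V) (ω : V → Bool) => ω i) (Measure.pi fun _ : V => ν) :=
    iIndepFun_pi (X := fun _ b => b) (fun _ => aemeasurable_id)
  have h := hind.indepFun_finset S T hST (fun i => measurable_pi_apply i)
  have key : ∀ (S : Finset V) (A : Set (V → Bool)),
      (∀ ω ω', (∀ v ∈ S, ω v = ω' v) → ω ∈ A → ω' ∈ A) →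
      A = (fun (a : V → Bool) (i : S) => a i) ⁻¹' ((fun (a : V → Bool) (i : S) => a i) '' A) := by
    intro S A hA
    refine Set.Subset.antisymm (Set.subset_preimage_image _ _) ?_
    rintro ω ⟨ω', h', he⟩
    exact hA ω' ω (fun v hv => congrFun he ⟨v, hv⟩) h'
  have := h.measure_inter_preimage_eq_mul ((fun (a : V → Bool) (i : S) => a i) '' A)
    ((fun (a : V → Bool) (i : T) => a i) '' B) (Set.toFinite _).measurableSet
    (Set.toFinite _).measurableSet
  rw [← key S A hA, ← key T B hB] at this
  simp only [Measure.real, this, ENNReal.toReal_mul]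

/-- Symmetric Lovász Local Lemma for events `A i` determined by coordinate sets `sc i`: two events
are dependent when their coordinate sets meet, and `d` bounds the number of events dependent on a
given one. The conditional bound of the usual proof is kept in product form,
`μ (A i ∩ B J) ≤ 2p μ (B J)` where `B J` avoids all `A j` with `j ∈ J`, so that no conditioning on
an event of possibly zero measure is needed. -/
theorem local_lemma {V I : Type} [Fintype V] [Fintype I] (ν : Measure Bool)
    [IsProbabilityMeasure ν] (sc : I → Finset V) (A : I → Set (V → Bool))
    (hA : ∀ i ω ω', (∀ v ∈ sc i, ω v = ω' v) → ω ∈ A i → ω' ∈ A i)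
    (p d : ℝ) (hp : ∀ i, (Measure.pi fun _ : V => ν).real (A i) ≤ p)
    (hd : ∀ i, (Set.ncard {j | ¬ Disjoint (sc i) (sc j)} : ℝ) ≤ d)
    (hp0 : 0 ≤ p) (hp1 : p ≤ 1 / 4) (hpd : 4 * p * d ≤ 1) : ∃ ω, ∀ i, ω ∉ A i := by
  classical
  set μ := Measure.pi fun _ : V => ν with hμ
  let B : Finset I → Set (V → Bool) := fun J => {ω | ∀ j ∈ J, ω ∉ A j}
  have hind : ∀ i (J : Finset I), (∀ j ∈ J, Disjoint (sc i) (sc j)) →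
      μ.real (A i ∩ B J) = μ.real (A i) * μ.real (B J) := by
    intro i J hJ
    refine indep_of_disjoint ν (sc i) (J.biUnion sc) ?_ _ _ (hA i) ?_
    · rw [Finset.disjoint_biUnion_right]; exact hJ
    · intro ω ω' h hω j hj hj'
      exact hω j hj (hA j ω' ω (fun v hv =>
        (h v (Finset.mem_biUnion.2 ⟨j, hj, hv⟩)).symm) hj')
  have main : ∀ n (J : Finset I), J.card = n → ∀ i, μ.real (A i ∩ B J) ≤ 2 * p * μ.real (B J) := by
    intro n
    induction n using Nat.strong_induction_on with
    | _ n ih =>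
      intro J hJn i
      -- Only the events in `J2` are independent of `A i`; those in `J1` cost at most half of `B J2`.
      let J1 := J.filter (fun j => ¬ Disjoint (sc i) (sc j))
      let J2 := J.filter (fun j => Disjoint (sc i) (sc j))
      have h2 : μ.real (A i ∩ B J2) ≤ p * μ.real (B J2) := by
        rw [hind i J2 (fun j hj => (Finset.mem_filter.1 hj).2)]
        exact mul_le_mul_of_nonneg_right (hp i) measureReal_nonneg
      have hsub : B J ⊆ B J2 := fun ω hω j hj => hω j (Finset.filter_subset _ _ hj)
      have h1 : μ.real (A i ∩ B J) ≤ μ.real (A i ∩ B J2) :=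
        measureReal_mono (Set.inter_subset_inter_right _ hsub)
      have h3 : μ.real (B J2) ≤ 2 * μ.real (B J) := by
        by_cases hne : J2 = J
        · rw [hne]; linarith [measureReal_nonneg (μ := μ) (s := B J)]
        have hlt : J2.card < n := by
          rw [← hJn]
          exact Finset.card_lt_card ((Finset.filter_subset _ _).ssubset_of_ne hne)
        have hcov : B J2 ⊆ B J ∪ ⋃ j ∈ J1, (A j ∩ B J2) := by
          intro ω hω
          by_cases hJ : ω ∈ B J
          · exact Or.inl hJ
          right
          simp only [B, Set.mem_ofPred_eq, not_forall, not_not] at hJ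
          obtain ⟨j, hj, hjA⟩ := hJ
          have hj1 : j ∈ J1 := by
            refine Finset.mem_filter.2 ⟨hj, fun hdis => hω j (Finset.mem_filter.2 ⟨hj, hdis⟩) hjA⟩
          exact Set.mem_biUnion (x := j) hj1 ⟨hjA, hω⟩
        have hle : μ.real (B J2) ≤ μ.real (B J) + ∑ j ∈ J1, μ.real (A j ∩ B J2) :=
          (measureReal_mono hcov).trans ((measureReal_union_le _ _).trans
            (add_le_add_right (measureReal_biUnion_finset_le _ _) _))
        have hsum : ∑ j ∈ J1, μ.real (A j ∩ B J2) ≤ J1.card * (2 * p * μ.real (B J2)) := by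
          rw [← nsmul_eq_mul]
          exact Finset.sum_le_card_nsmul _ _ _ (fun j _ => ih _ hlt J2 rfl j)
        have hcard : (J1.card : ℝ) ≤ d := by
          refine le_trans ?_ (hd i)
          rw [← Set.ncard_coe_finset]
          have hJ1 : (J1 : Set I) ⊆ {j | ¬ Disjoint (sc i) (sc j)} := fun j hj =>
            (Finset.mem_filter.1 (Finset.mem_coe.1 hj)).2
          exact_mod_cast Set.ncard_le_ncard hJ1 (Set.toFinite _)
        have hnn : 0 ≤ μ.real (B J2) := measureReal_nonneg
        nlinarith [mul_le_mul_of_nonneg_right hcard (by positivity : 0 ≤ 2 * p * μ.real (B J2)),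
          mul_le_mul_of_nonneg_right hpd hnn]
      nlinarith
  have pos : ∀ J : Finset I, 0 < μ.real (B J) := by
    intro J
    induction J using Finset.induction_on with
    | empty => simp [B]
    | insert i J _ ih =>
      have hcov : B J ⊆ B (insert i J) ∪ (A i ∩ B J) := by
        intro ω hω
        by_cases h : ω ∈ A i
        · exact Or.inr ⟨h, hω⟩
        · left
          intro j hj
          rcases Finset.mem_insert.1 hj with rfl | hj
          · exact h
          · exact hω j hj
      have := (measureReal_mono hcov (μ := μ)).trans (measureReal_union_le _ _)
      have := main _ J rfl i
      nlinarith
  have hpos := pos Finset.univ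
  have hne : (B Finset.univ).Nonempty := by
    by_contra h
    rw [Set.not_nonempty_iff_eq_empty.1 h] at hpos
    simp at hpos
  obtain ⟨ω, hω⟩ := hne
  exact ⟨ω, fun i => hω i (Finset.mem_univ _)⟩

/-! ### Tail bounds for the number of kept vertices -/

/-- The count of kept vertices in `T` is binomial, with generating function
`(1 + q(eᵗ - 1)) ^ |T|`, and `1 + x ≤ eˣ`. -/
theorem mgf_count {V : Type} [Fintype V] (q : unitInterval) (T : Finset V) (t : ℝ) :
    mgf (fun ω : V → Bool => ((T.filter (fun v => ω v = true)).card : ℝ))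
      (Measure.pi fun _ : V => bernoulliMeasure true false q) t
      ≤ Real.exp (T.card * (q : ℝ) * (Real.exp t - 1)) := by
  set ν := bernoulliMeasure true false q
  have hind : iIndepFun (fun (i : V) (ω : V → Bool) => if ω i = true then (1 : ℝ) else 0)
      (Measure.pi fun _ : V => ν) :=
    iIndepFun_pi (X := fun _ b => if b = true then (1 : ℝ) else 0)
      (fun _ => (measurable_of_finite _).aemeasurable)
  have h := hind.mgf_sum (t := t) (fun i => measurable_of_finite _) T
  have heq : (fun ω : V → Bool => ((T.filter (fun v => ω v = true)).card : ℝ)) =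
      ∑ i ∈ T, fun (ω : V → Bool) => if ω i = true then (1 : ℝ) else 0 := by
    ext ω; simp
  have h1 : ∀ i : V, mgf (fun (ω : V → Bool) => if ω i = true then (1 : ℝ) else 0)
      (Measure.pi fun _ : V => ν) t = 1 + q * (Real.exp t - 1) := by
    intro i
    have hmp := measurePreserving_eval (fun _ : V => ν) i
    have h2 := integral_map (μ := Measure.pi fun _ : V => ν) hmp.measurable.aemeasurable
      (f := fun b : Bool => Real.exp (t * if b = true then (1 : ℝ) else 0))
      (measurable_of_finite _).aestronglyMeasurable
    rw [hmp.map_eq] at h2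
    rw [mgf]
    refine h2.symm.trans ?_
    rw [integral_bernoulliMeasure]
    simp
    ring
  rw [heq, h, Finset.prod_congr rfl (fun i _ => h1 i), Finset.prod_const, mul_assoc,
    Real.exp_nat_mul]
  have hq0 := q.2.1
  have hq1 := q.2.2
  refine pow_le_pow_left₀ ?_ ?_ _
  · nlinarith [Real.exp_pos t]
  · linarith [Real.add_one_le_exp ((q : ℝ) * (Real.exp t - 1))]

theorem upper_tail {V : Type} [Fintype V] (q : unitInterval) (T : Finset V) (t a : ℝ) (ht : 0 ≤ t) :
    (Measure.pi fun _ : V => bernoulliMeasure true false q).real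
      {ω | a ≤ ((T.filter (fun v => ω v = true)).card : ℝ)}
      ≤ Real.exp (-t * a + T.card * (q : ℝ) * (Real.exp t - 1)) := by
  rw [Real.exp_add]
  exact (measure_ge_le_exp_mul_mgf a ht .of_finite).trans
    (mul_le_mul_of_nonneg_left (mgf_count q T t) (Real.exp_pos _).le)

theorem lower_tail {V : Type} [Fintype V] (q : unitInterval) (T : Finset V) (t a : ℝ) (ht : t ≤ 0) :
    (Measure.pi fun _ : V => bernoulliMeasure true false q).real
      {ω | ((T.filter (fun v => ω v = true)).card : ℝ) ≤ a}
      ≤ Real.exp (-t * a + T.card * (q : ℝ) * (Real.exp t - 1)) := by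
  rw [Real.exp_add]
  exact (measure_le_le_exp_mul_mgf a ht .of_finite).trans
    (mul_le_mul_of_nonneg_left (mgf_count q T t) (Real.exp_pos _).le)

/-! ### Numerical estimates -/

/-- Exponent of the upper Chernoff bound at `t = ε/6`, using `eᵗ - 1 ≤ t + t²`. -/
theorem degree_exponent (ε M n : ℝ) (hε0 : 0 < ε) (hε1 : ε < 1) (hM : 0 < M) (hn : n ≤ M ^ 3) :
    -(ε / 6) * ((1 + ε / 3) * M) + n * (M ^ 2)⁻¹ * (Real.exp (ε / 6) - 1) ≤ -(ε ^ 2 / 72) * M := by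
  have h1 := (abs_le.1 (Real.abs_exp_sub_one_sub_id_le (x := ε / 6)
    (by rw [abs_le]; constructor <;> linarith))).2
  have h0 : 0 ≤ Real.exp (ε / 6) - 1 := by
    linarith [Real.add_one_le_exp (ε / 6)]
  have hnp : n * (M ^ 2)⁻¹ ≤ M := by
    rw [← div_eq_mul_inv, div_le_iff₀ (by positivity)]; linarith
  have h2 := mul_le_mul_of_nonneg_right hnp h0
  have h3 : M * (Real.exp (ε / 6) - 1) ≤ M * (ε / 6 + (ε / 6) ^ 2) :=
    mul_le_mul_of_nonneg_left (by linarith) hM.le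
  nlinarith [mul_pos hM (pow_pos hε0 2)]

/-- Exponent of the lower Chernoff bound at `t = -ε/12`, using `eᵗ - 1 ≤ t + t²`. -/
theorem size_exponent (ε M n : ℝ) (hε0 : 0 < ε) (hε1 : ε < 1) (hM : 0 < M)
    (hn : (1 + ε) * M ^ 3 ≤ n) :
    -(-(ε / 12)) * ((1 + ε / 4) * ((1 + ε / 3) * M)) +
      n * (M ^ 2)⁻¹ * (Real.exp (-(ε / 12)) - 1) ≤ -(ε ^ 2 / 72) * M := by
  have h1 := (abs_le.1 (Real.abs_exp_sub_one_sub_id_le (x := -(ε / 12))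
    (by rw [abs_le]; constructor <;> linarith))).2
  have h0 : Real.exp (-(ε / 12)) - 1 ≤ -(ε / 12) * (1 - ε / 12) := by nlinarith
  have hnp : (1 + ε) * M ≤ n * (M ^ 2)⁻¹ := by
    rw [← div_eq_mul_inv, le_div_iff₀ (by positivity)]; linarith
  have hneg : -(ε / 12) * (1 - ε / 12) ≤ 0 := by nlinarith
  have h2 := mul_le_mul_of_nonpos_right hnp (h0.trans hneg)
  have h3 : (1 + ε) * M * (Real.exp (-(ε / 12)) - 1) ≤
      (1 + ε) * M * (-(ε / 12) * (1 - ε / 12)) :=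
    mul_le_mul_of_nonneg_left h0 (by positivity)
  have h4 : (1 + ε / 4) * (1 + ε / 3) - (1 + ε) * (1 - ε / 12) ≤ -(ε / 6) := by nlinarith
  have h5 := mul_le_mul_of_nonneg_left h4 (by positivity : 0 ≤ M * (ε / 12))
  nlinarith

/-- Chernoff bound at `t = log M` for a count with mean at most `1/M` to reach ten: the left side is
at most `e M^{-10}`, and `36 e ≤ 4⁴ ≤ M⁴`. -/
theorem local_bound (M n : ℝ) (hM : 4 ≤ M) (hn : n ≤ M) :
    Real.exp (-Real.log M * 10 + n * (M ^ 2)⁻¹ * (Real.exp (Real.log M) - 1)) ≤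
      1 / (36 * M ^ 6) := by
  have hM0 : 0 < M := by linarith
  rw [Real.exp_add, Real.exp_log hM0]
  have h1 : Real.exp (-Real.log M * 10) = (M ^ 10)⁻¹ := by
    rw [neg_mul, Real.exp_neg, mul_comm, show (10 : ℝ) = ((10 : ℕ) : ℝ) by norm_num,
      Real.exp_nat_mul, Real.exp_log hM0]
  have h2 : n * (M ^ 2)⁻¹ * (M - 1) ≤ 1 := by
    rw [mul_right_comm, ← div_eq_mul_inv, div_le_one (by positivity)]
    nlinarith
  have h3 : Real.exp (n * (M ^ 2)⁻¹ * (M - 1)) ≤ 3 :=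
    (Real.exp_le_exp.2 h2).trans (by linarith [Real.exp_one_lt_d9])
  rw [h1, inv_mul_eq_div, div_le_div_iff₀ (by positivity) (by positivity)]
  have h4 : (256 : ℝ) ≤ M ^ 4 := by
    calc (256 : ℝ) = 4 ^ 4 := by norm_num
      _ ≤ M ^ 4 := pow_le_pow_left₀ (by norm_num) hM 4
  have h6 : 0 < M ^ 6 := by positivity
  calc _ ≤ 3 * (36 * M ^ 6) := mul_le_mul_of_nonneg_right h3 (by positivity)
    _ ≤ 256 * M ^ 6 := by nlinarith
    _ ≤ M ^ 4 * M ^ 6 := mul_le_mul_of_nonneg_right h4 h6.le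
    _ = 1 * M ^ 10 := by ring

theorem eventually_exp_le (c : ℝ) (hc : 0 < c) :
    ∀ᶠ M : ℝ in Filter.atTop, Real.exp (-c * M) ≤ 1 / (36 * M ^ 6) := by
  have h := (Real.tendsto_pow_mul_exp_neg_atTop_nhds_zero 6).comp
    (Filter.tendsto_id.const_mul_atTop hc)
  have h2 := h.eventually_le_const (show (0 : ℝ) < c ^ 6 / 36 by positivity)
  filter_upwards [h2, Filter.eventually_gt_atTop 0] with M hM hM0
  simp only [Function.comp, id] at hM
  rw [mul_pow, mul_assoc, le_div_iff₀ (by norm_num), mul_assoc] at hM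
  have := le_of_mul_le_mul_left (hM.trans_eq (mul_one _).symm) (pow_pos hc 6)
  rw [le_div_iff₀ (by positivity), neg_mul]
  linarith

/-! ### Random thinning of the graph -/

/-- The random selection step, for parts already shrunk to `⌈(1 + ε)Δ⌉` vertices. The vertices
kept are those with `ω v = true`. -/
theorem thinning (ε : ℝ) (hε0 : 0 < ε) (hε1 : ε < 1) (M : ℝ) (Δ : ℕ) (hMΔ : M ^ 3 = Δ)
    (hM4 : 4 ≤ M) (hexp : Real.exp (-(ε ^ 2 / 72) * M) ≤ 1 / (36 * M ^ 6))
    {V ι : Type} [Fintype V] [DecidableEq V] [Fintype ι] (part : V → ι) (nb : V → Finset V)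
    (hsymm : ∀ u v, u ∈ nb v → v ∈ nb u)
    (hdeg : ∀ v, (nb v).card ≤ Δ) (Q : ι → Finset V) (hQ : ∀ i, ∀ v ∈ Q i, part v = i)
    (hQcard : ∀ i, (Q i).card = ⌈(1 + ε) * Δ⌉₊)
    (hloc : ∀ v i, part v ≠ i → (((nb v).filter (· ∈ Q i)).card : ℝ) ≤ M) :
    ∃ ω : V → Bool,
      (∀ v, (((nb v).filter (fun u => ω u = true)).card : ℝ) ≤ (1 + ε / 3) * M) ∧
      (∀ i, (1 + ε / 4) * ((1 + ε / 3) * M) ≤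
        (((Q i).filter (fun u => ω u = true)).card : ℝ)) ∧
      (∀ v i, part v ≠ i →
        ((((nb v).filter (· ∈ Q i)).filter (fun u => ω u = true)).card : ℝ) < 10) := by
  classical
  have hM0 : 0 < M := by linarith
  have hΔ : (64 : ℝ) ≤ Δ := by
    rw [← hMΔ]
    calc (64 : ℝ) = 4 ^ 3 := by norm_num
      _ ≤ M ^ 3 := pow_le_pow_left₀ (by norm_num) hM4 3
  let q : unitInterval := ⟨(M ^ 2)⁻¹, by positivity, inv_le_one_of_one_le₀ (by nlinarith)⟩
  -- The three summands index the degree, local degree and part size events; `sc` gives the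
  -- vertices each event depends on. The pairs with `part v = i` carry an empty event.
  let sc : V ⊕ (V × ι) ⊕ ι → Finset V := fun
    | .inl v => nb v
    | .inr (.inl (v, i)) => if part v = i then ∅ else (nb v).filter (· ∈ Q i)
    | .inr (.inr i) => Q i
  let X : Finset V → (V → Bool) → ℝ := fun T ω => (T.filter (fun u => ω u = true)).card
  let A : V ⊕ (V × ι) ⊕ ι → Set (V → Bool) := fun
    | .inl v => {ω | (1 + ε / 3) * M ≤ X (nb v) ω}
    | .inr (.inl (v, i)) => {ω | 10 ≤ X (sc (.inr (.inl (v, i)))) ω}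
    | .inr (.inr i) => {ω | X (Q i) ω ≤ (1 + ε / 4) * ((1 + ε / 3) * M)}
  have hX : ∀ T ω ω', (∀ v ∈ T, ω v = ω' v) → X T ω = X T ω' := by
    intro T ω ω' h
    simp only [X]
    rw [Finset.filter_congr (fun v hv => by rw [h v hv])]
  have hdep : ∀ i ω ω', (∀ v ∈ sc i, ω v = ω' v) → ω ∈ A i → ω' ∈ A i := by
    rintro (v | ⟨v, i⟩ | i) ω ω' h hω
    all_goals
      have := hX _ _ _ h
      simp only [A, sc, Set.mem_ofPred_eq] at hω this ⊢
      rw [← this]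
      exact hω
  have hcardQ : ∀ i, (Q i).card ≤ 3 * Δ := by
    intro i
    rw [hQcard]
    refine Nat.ceil_le.2 ?_
    push_cast
    nlinarith
  have hsc : ∀ j, (sc j).card ≤ 3 * Δ := by
    rintro (v | ⟨v, i⟩ | i)
    · exact (hdeg v).trans (by omega)
    · simp only [sc]
      split_ifs
      · simp
      · exact (Finset.card_filter_le _ _).trans ((hdeg v).trans (by omega))
    · exact hcardQ i
  -- `F v` contains every event depending on `v`: a local degree event at `(u, i)` involves `v` only
  -- when `u` is a neighbour of `v` and `i` is the part of `v`.
  let F : V → Finset (V ⊕ (V × ι) ⊕ ι) := fun v =>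
    (nb v).image .inl ∪ ((nb v).image (fun u => .inr (.inl (u, part v))) ∪ {.inr (.inr (part v))})
  have hF : ∀ v j, v ∈ sc j → j ∈ F v := by
    rintro v (u | ⟨u, i⟩ | i) h
    · simpa [F] using hsymm _ _ h
    · simp only [sc] at h
      split_ifs at h
      · simp at h
      · obtain ⟨h1, h2⟩ := Finset.mem_filter.1 h
        simpa [F, hQ i v h2] using hsymm _ _ h1
    · simp [F, hQ i v h]
  have hFcard : ∀ v, (F v).card ≤ 3 * Δ := by
    intro v
    have h1 : ((nb v).image (Sum.inl : V → V ⊕ (V × ι) ⊕ ι)).card ≤ Δ :=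
      Finset.card_image_le.trans (hdeg v)
    have h2 : ((nb v).image
        (fun u => (Sum.inr (Sum.inl (u, part v)) : V ⊕ (V × ι) ⊕ ι))).card ≤ Δ :=
      Finset.card_image_le.trans (hdeg v)
    have h3 : 64 ≤ Δ := by exact_mod_cast hΔ
    refine (Finset.card_union_le _ _).trans
      ((Nat.add_le_add h1 ((Finset.card_union_le _ _).trans (Nat.add_le_add_right h2 _))).trans ?_)
    simp
    omega
  have hd : ∀ i, (Set.ncard {j | ¬ Disjoint (sc i) (sc j)} : ℝ) ≤ 9 * M ^ 6 := by
    intro i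
    have hsub : {j | ¬ Disjoint (sc i) (sc j)} ⊆ (((sc i).biUnion F : Finset _) : Set _) := by
      intro j hj
      obtain ⟨v, h1, h2⟩ := Finset.not_disjoint_iff.1 hj
      exact Finset.mem_coe.2 (Finset.mem_biUnion.2 ⟨v, h1, hF v j h2⟩)
    have h1 := Set.ncard_le_ncard hsub (Set.toFinite _)
    rw [Set.ncard_coe_finset] at h1
    have h2 := h1.trans ((Finset.card_biUnion_le_card_mul _ _ _ (fun v _ => hFcard v)).trans
      (Nat.mul_le_mul_right _ (hsc i)))
    have h3 : (Set.ncard {j | ¬ Disjoint (sc i) (sc j)} : ℝ) ≤ 3 * Δ * (3 * Δ) := by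
      exact_mod_cast h2
    refine h3.trans_eq ?_
    rw [← hMΔ]; ring
  have hprob : ∀ j, (Measure.pi fun _ : V => bernoulliMeasure true false q).real (A j) ≤
      1 / (36 * M ^ 6) := by
    rintro (v | ⟨v, i⟩ | i)
    · refine (upper_tail q (nb v) (ε / 6) _ (by positivity)).trans
        ((Real.exp_le_exp.2 ?_).trans hexp)
      exact degree_exponent ε M _ hε0 hε1 hM0 (by rw [hMΔ]; exact_mod_cast hdeg v)
    · refine (upper_tail q _ (Real.log M) _ (Real.log_nonneg (by linarith))).trans
        (local_bound M _ hM4 ?_)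
      simp only [sc]
      split_ifs with h
      · simpa using hM0.le
      · exact hloc v i h
    · refine (lower_tail q (Q i) (-(ε / 12)) _ (by linarith)).trans
        ((Real.exp_le_exp.2 ?_).trans hexp)
      refine size_exponent ε M _ hε0 hε1 hM0 ?_
      rw [hMΔ, hQcard]
      exact Nat.le_ceil _
  have hM6 : 1 ≤ M ^ 6 := one_le_pow₀ (by linarith)
  obtain ⟨ω, hω⟩ := local_lemma (bernoulliMeasure true false q) sc A hdep (1 / (36 * M ^ 6))
    (9 * M ^ 6) hprob hd (by positivity)
    (by rw [div_le_div_iff₀ (by positivity) (by norm_num)]; linarith)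
    (by field_simp; norm_num)
  refine ⟨ω, fun v => (not_le.1 (hω (.inl v))).le, fun i => (not_le.1 (hω (.inr (.inr i)))).le,
    fun v i h => ?_⟩
  have h10 := hω (.inr (.inl (v, i)))
  simp only [A, sc, X, if_neg h, Set.mem_ofPred_eq, not_le] at h10
  exact h10


/-- Lemma: for 0 < ε < 1 and Δ sufficiently large, any multipartite graph with
maximum degree at most Δ, parts of size at least (1+ε)Δ and local degree at most
Δ^{1/3} contains an induced multipartite subgraph (on W_i ⊆ V_i) with maximum
degree at most Δ' = (1+ε/3)Δ^{1/3}, parts of size at least (1+ε/4)Δ', and local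
degree less than 10. -/
theorem stmt_13 (ε : ℝ) (hε0 : 0 < ε) (hε1 : ε < 1) :
    ∃ Δ₀ : ℕ, ∀ Δ : ℕ, Δ₀ < Δ →
      ∀ (V ι : Type) [Finite V] (G : SimpleGraph V) (P : ι → Set V),
        (∀ v, ∃! i, v ∈ P i) →
        (∀ v, (G.neighborSet v).ncard ≤ Δ) →
        (∀ (v : V) (i : ι), v ∉ P i →
          ((G.neighborSet v ∩ P i).ncard : ℝ) ≤ (Δ : ℝ) ^ ((1 : ℝ) / 3)) →
        (∀ i, (1 + ε) * Δ ≤ ((P i).ncard : ℝ)) →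
        ∃ W : ι → Set V,
          (∀ i, W i ⊆ P i) ∧
          (∀ v ∈ ⋃ i, W i,
            (((G.neighborSet v) ∩ ⋃ i, W i).ncard : ℝ) ≤ (1 + ε / 3) * (Δ : ℝ) ^ ((1 : ℝ) / 3)) ∧
          (∀ i, (1 + ε / 4) * ((1 + ε / 3) * (Δ : ℝ) ^ ((1 : ℝ) / 3)) ≤ ((W i).ncard : ℝ)) ∧
          (∀ v ∈ ⋃ i, W i, ∀ i, v ∉ P i →
            (((G.neighborSet v) ∩ W i).ncard : ℝ) < 10) := by
  classical
  have hlim : Filter.Tendsto (fun n : ℕ => (n : ℝ) ^ ((1 : ℝ) / 3)) Filter.atTop Filter.atTop :=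
    (tendsto_rpow_atTop (by norm_num)).comp tendsto_natCast_atTop_atTop
  obtain ⟨Δ₀, hΔ₀⟩ := Filter.eventually_atTop.1
    ((hlim.eventually (eventually_exp_le (ε ^ 2 / 72) (by positivity))).and
      (hlim.eventually (Filter.eventually_ge_atTop 4)))
  refine ⟨Δ₀, fun Δ hΔ V ι _ G P hP hdeg hloc hsize => ?_⟩
  obtain ⟨hexp, hM4⟩ := hΔ₀ Δ hΔ.le
  have hMΔ : ((Δ : ℝ) ^ ((1 : ℝ) / 3)) ^ 3 = Δ := by
    rw [← Real.rpow_natCast, ← Real.rpow_mul (Nat.cast_nonneg _)]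
    norm_num
  set M := (Δ : ℝ) ^ ((1 : ℝ) / 3)
  have hΔpos : (0 : ℝ) < Δ := by exact_mod_cast (Nat.zero_le _).trans_lt hΔ
  have := Fintype.ofFinite V
  choose part hpart huniq using hP
  -- Every part is nonempty because `Δ > 0`, so there are finitely many parts.
  have hsurj : Function.Surjective part := by
    intro i
    have hpos : (0 : ℝ) < (P i).ncard := lt_of_lt_of_le (by positivity) (hsize i)
    obtain ⟨v, hv⟩ := Set.nonempty_of_ncard_ne_zero (s := P i)
      (by intro h; rw [h] at hpos; simp at hpos)
    exact ⟨v, (huniq v i hv).symm⟩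
  have := Finite.of_surjective part hsurj
  have := Fintype.ofFinite ι
  have hQ : ∀ i, ∃ Q : Finset V, (Q : Set V) ⊆ P i ∧ Q.card = ⌈(1 + ε) * Δ⌉₊ := by
    intro i
    obtain ⟨t, ht, hc⟩ := Set.exists_subset_card_eq (Nat.ceil_le.2 (hsize i))
    exact ⟨t.toFinset, by simpa using ht, by rw [← hc, Set.ncard_eq_toFinset_card']⟩
  choose Q hQP hQcard using hQ
  have hnot : ∀ v i, part v ≠ i ↔ v ∉ P i := fun v i =>
    ⟨fun h hv => h (huniq v i hv).symm, fun h he => h (he ▸ hpart v)⟩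
  let nb : V → Finset V := fun v => Finset.univ.filter (G.Adj v)
  obtain ⟨ω, h1, h2, h3⟩ := thinning ε hε0 hε1 M Δ hMΔ hM4 hexp part nb
    (by intro u v h; simpa [nb, G.adj_comm] using h)
    (by
      intro v
      rw [← Set.ncard_coe_finset]
      refine le_trans (Set.ncard_le_ncard ?_ (Set.toFinite _)) (hdeg v)
      intro u hu
      simpa [nb] using hu)
    Q (fun i v hv => (huniq v i (hQP i hv)).symm) hQcard
    (by
      intro v i h
      refine le_trans ?_ (hloc v i ((hnot v i).1 h))
      rw [← Set.ncard_coe_finset]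
      refine Nat.cast_le.2 (Set.ncard_le_ncard ?_ (Set.toFinite _))
      intro u hu
      have hu := Finset.mem_filter.1 (Finset.mem_coe.1 hu)
      exact ⟨by simpa [nb] using hu.1, hQP i hu.2⟩)
  refine ⟨fun i => {u | u ∈ Q i ∧ ω u = true}, fun i u hu => hQP i hu.1, ?_, ?_, ?_⟩
  · intro v _
    refine le_trans ?_ (h1 v)
    rw [← Set.ncard_coe_finset]
    refine Nat.cast_le.2 (Set.ncard_le_ncard ?_ (Set.toFinite _))
    rintro u ⟨hu, hu'⟩
    obtain ⟨i, hi⟩ := Set.mem_iUnion.1 hu'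
    exact Finset.mem_coe.2 (Finset.mem_filter.2 ⟨by simpa [nb] using hu, hi.2⟩)
  · intro i
    refine (h2 i).trans ?_
    rw [← Set.ncard_coe_finset]
    refine Nat.cast_le.2 (Set.ncard_le_ncard ?_ (Set.toFinite _))
    intro u hu
    exact Finset.mem_filter.1 (Finset.mem_coe.1 hu)
  · intro v _ i hv
    refine lt_of_le_of_lt ?_ (h3 v i ((hnot v i).2 hv))
    rw [← Set.ncard_coe_finset]
    refine Nat.cast_le.2 (Set.ncard_le_ncard ?_ (Set.toFinite _))
    rintro u ⟨hu, hu'⟩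
    exact Finset.mem_coe.2 (Finset.mem_filter.2
      ⟨Finset.mem_filter.2 ⟨by simpa [nb] using hu, hu'.1⟩, hu'.2⟩)
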